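/- arXiv:1301.5488 — 6 statements merged into one kernel-verified Lean document; each statement's English description precedes it below -/
import Mathlib

section
/- Let Ξ be a finite nonempty set of state classes, A a finite set of actions with |A| ≥ 2, and H a finite nonempty set of hypotheses, each h ∈ H being a function h : Ξ × A → {−1, 1} such that for every h ∈ H and every i ∈ Ξ there is exactly one action a ∈ A with h(i,a) = 1. Fix k ≥ 1 and assume (Ξ,H) is k-neighborly. Let c be a real number such that for every action a ∈ A there exists a probability vector μ on Ξ with Σ_{i∈Ξ} h(i,a)·μ(i) ≤ c for every h ∈ H. Then for every probability distribution p on H, at least one of the following holds: (1) there exists i ∈ Ξ with max_{a∈A} Σ_{h∈H} p(h)·h(i,a) ≤ c; or (2) there exist classes i, j ∈ Ξ that are k-neighbors and an action a ∈ A such that Σ_{h∈H} p(h)·h(i,a) > c and Σ_{h∈H} p(h)·h(j,a) < −c, and moreover max_{a'∈A} Σ_{h∈H} p(h)·h(i,a') > c and max_{a'∈A} Σ_{h∈H} p(h)·h(j,a') > c. -/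
/-! For each class `i` write `E i a = ∑ h, p h * F h i a`. A hypothesis takes the value `1` at no more
than one action of a class, so `E i a + E i b ≤ 0` for `a ≠ b`. If no class satisfies the first
alternative, choose at each class an action `f i` with `E i (f i) > c`. If two neighbors have
`f i ≠ f j`, then `E j (f i) ≤ -E j (f j) < -c`, which is the second alternative. Otherwise `f` is
constant along chains of neighbors, hence constant, say with value `a`; averaging `E i a > c` against
the probability vector `μ` attached to `a` contradicts `∑ i, F h i a * μ i ≤ c`. -/

open scoped Classical

theorem eq_of_isChain {α β : Type*} {r : α → α → Prop} {f : α → β}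
    (hf : ∀ i j, r i j → f i = f j) :
    ∀ (l : List α) (i j : α), l.IsChain r → l.head? = some i → l.getLast? = some j →
      f i = f j := by
  intro l
  induction l with
  | nil => intro i j _ h; simp at h
  | cons x l ih =>
    intro i j hc hi hj
    cases l with
    | nil => simp_all
    | cons y l =>
      rw [List.isChain_cons_cons] at hc
      simp only [List.head?_cons, Option.some.injEq] at hi
      subst hi
      exact (hf _ _ hc.1).trans (ih y j hc.2 rfl (by simpa using hj))

/-- Two distinct actions cannot both be optimal, so their weighted predictions cannot both be
positive. -/
theorem weighted_add_nonpos {A Hy : Type*} [Fintype Hy] (G : Hy → A → ℝ)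
    (hval : ∀ h a, G h a = 1 ∨ G h a = -1) (hopt : ∀ h, ∃! a, G h a = 1)
    (p : Hy → ℝ) (hp0 : ∀ h, 0 ≤ p h) {a b : A} (hab : a ≠ b) :
    (∑ h, p h * G h a) + (∑ h, p h * G h b) ≤ 0 := by
  rw [← Finset.sum_add_distrib]
  refine Finset.sum_nonpos fun h _ => ?_
  rw [← mul_add]
  refine mul_nonpos_of_nonneg_of_nonpos (hp0 h) ?_
  rcases hval h a with ha | ha <;> rcases hval h b with hb | hb
  · exact absurd ((hopt h).unique ha hb) hab
  all_goals rw [ha, hb]; norm_num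

/-- For any action, averaging over `μ` and exchanging the two sums shows that the weighted
prediction is at most `c` at some class. -/
theorem exists_weighted_le {Ξ Hy : Type*} [Fintype Ξ] [Fintype Hy] (G : Hy → Ξ → ℝ) (c : ℝ)
    (μ : Ξ → ℝ) (hμ0 : ∀ i, 0 ≤ μ i) (hμ1 : (∑ i, μ i) = 1) (hμ : ∀ h, (∑ i, G h i * μ i) ≤ c)
    (p : Hy → ℝ) (hp0 : ∀ h, 0 ≤ p h) (hp1 : (∑ h, p h) = 1) :
    ∃ i, (∑ h, p h * G h i) ≤ c := by
  by_contra! hlt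
  have hle : ∑ i, μ i * (∑ h, p h * G h i) ≤ c := by
    calc ∑ i, μ i * (∑ h, p h * G h i) = ∑ h, p h * (∑ i, G h i * μ i) := by
          simp only [Finset.mul_sum]
          rw [Finset.sum_comm]
          exact Finset.sum_congr rfl fun h _ => Finset.sum_congr rfl fun i _ => by ring
      _ ≤ ∑ h, p h * c :=
          Finset.sum_le_sum fun h _ => mul_le_mul_of_nonneg_left (hμ h) (hp0 h)
      _ = c := by rw [← Finset.sum_mul, hp1, one_mul]
  obtain ⟨i, -, hi⟩ : ∃ i ∈ Finset.univ, 0 < μ i :=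
    Finset.exists_lt_of_sum_lt (f := fun _ => (0 : ℝ)) (by simp [hμ1])
  have hgt : ∑ i, μ i * c < ∑ i, μ i * (∑ h, p h * G h i) :=
    Finset.sum_lt_sum (fun i _ => mul_le_mul_of_nonneg_left (hlt i).le (hμ0 i))
      ⟨i, Finset.mem_univ i, mul_lt_mul_of_pos_left (hlt i) hi⟩
  rw [← Finset.sum_mul, hμ1, one_mul] at hgt
  exact absurd hle (not_le.mpr hgt)

/-- **Multi-class GBS lemma (Lemma 1).**  `Ξ` is the finite nonempty set of state
classes, `A` the finite action set with at least two actions, `Hy` the finite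
nonempty index set of hypotheses, and `F h i a ∈ {-1,1}` the value of hypothesis
`h` at class `i` and action `a`, with exactly one action having value `1`.
`kNb i j` means `i` and `j` are `k`-neighbors (at most `k` hypotheses have
different optimal-action sets at `i` and `j`), and `(Ξ,H)` is `k`-neighborly
(any two classes are connected by a chain of `k`-neighbors).  `c` is a coherence
bound: for every action there is a probability vector `μ` on `Ξ` with
`∑ i, F h i a * μ i ≤ c` for every hypothesis `h`.  Then for any probability
distribution `p` on hypotheses, either some class has weighted prediction at
most `c`, or there are two `k`-neighboring classes with weighted predictions
above `c` but different predicted actions. -/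
theorem gbs_irl_incoherence
    {Ξ A Hy : Type*} [Fintype Ξ] [Nonempty Ξ] [Fintype A] [Fintype Hy] [Nonempty Hy]
    (hA : 2 ≤ Fintype.card A)
    (F : Hy → Ξ → A → ℝ)
    (hval : ∀ h i a, F h i a = 1 ∨ F h i a = -1)
    (hopt : ∀ h i, ∃! a, F h i a = 1)
    (k : ℕ) (hk : 1 ≤ k)
    (kNb : Ξ → Ξ → Prop)
    (hkNb : ∀ i j, kNb i j ↔
      (Finset.univ.filter (fun h : Hy => {a | F h i a = 1} ≠ {a | F h j a = 1})).card ≤ k)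
    (hconn : ∀ i j : Ξ, ∃ l : List Ξ, l.Chain' kNb ∧ l.head? = some i ∧ l.getLast? = some j)
    (c : ℝ)
    (hc : ∀ a : A, ∃ μ : Ξ → ℝ, (∀ i, 0 ≤ μ i) ∧ (∑ i, μ i) = 1 ∧
      ∀ h : Hy, (∑ i, F h i a * μ i) ≤ c)
    (p : Hy → ℝ) (hp0 : ∀ h, 0 ≤ p h) (hp1 : (∑ h, p h) = 1) :
    (∃ i : Ξ, ∀ a : A, (∑ h, p h * F h i a) ≤ c) ∨
    (∃ i j : Ξ, ∃ a : A, kNb i j ∧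
      (∑ h, p h * F h i a) > c ∧ (∑ h, p h * F h j a) < -c ∧
      (∃ a' : A, (∑ h, p h * F h i a') > c) ∧
      (∃ a' : A, (∑ h, p h * F h j a') > c)) := by
  by_contra hcon
  obtain ⟨hcon1, hcon2⟩ := not_or.mp hcon
  push Not at hcon1
  choose f hf using hcon1
  have hconst : ∀ i j, kNb i j → f i = f j := by
    intro i j hij
    by_contra hne
    have hsum := weighted_add_nonpos (fun h a => F h j a) (fun h a => hval h j a)
      (fun h => hopt h j) p hp0 hne
    refine hcon2 ⟨i, j, f i, hij, hf i, ?_, ⟨f i, hf i⟩, ⟨f j, hf j⟩⟩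
    have := hf j
    linarith
  obtain ⟨i₀⟩ := ‹Nonempty Ξ›
  obtain ⟨μ, hμ0, hμ1, hμ⟩ := hc (f i₀)
  obtain ⟨j, hj⟩ := exists_weighted_le (fun h i => F h i (f i₀)) c μ hμ0 hμ1 hμ p hp0 hp1
  obtain ⟨l, hl, hhead, hlast⟩ := hconn i₀ j
  have heq := eq_of_isChain hconst l i₀ j hl hhead hlast
  have hlt := hf j
  rw [← heq] at hlt
  exact absurd hj (not_le.mpr hlt)
end

section
/- Let A be a finite set of actions with |A| = n ≥ 2, H a finite set of hypotheses h : A → {−1, 1} (values at one fixed state x) such that each h ∈ H takes the value 1 at exactly one action, h* ∈ H, and a* the unique action with h*(a*) = 1. Let p be a probability distribution on H with 0 < p(h*) < 1, and let β*, γ*, β̂, γ̂ be positive reals with (n−1)β* + γ* = 1, (n−1)β̂ + γ̂ = 1, and 0 < β* ≤ β̂ < γ̂ ≤ γ*. Define ℓ̂(a,h) = γ̂ if h(a) = 1 and β̂ otherwise; ℓ*(a) = γ* if a = a* and β* otherwise; the Bayesian posterior p_a(h) = p(h)ℓ̂(a,h)/Σ_{h'} p(h')ℓ̂(a,h'); and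 the odds against h*, C(q) = (1 − q(h*))/q(h*). Then Σ_{a∈A} ℓ*(a)·C(p_a) ≤ C(p); moreover the inequality is strict if β* < β̂ and δ(a*) := Σ_{h : h(a*)=1} p(h) < 1. -/
open scoped Classical

/-!
Write `P = p h*` and `Z a = ∑ h, p h * ℓ̂(a, h)` for the normalising constant of the update.  Since
`C (p_a) = Z a / (P * ℓ̂(a, h*)) - 1`, the expected odds equal
`(∑ a, ℓ*(a) / ℓ̂(a, h*) * Z a) / P - 1`.  The ratio `ℓ*(a) / ℓ̂(a, h*)` is `γ* / γ̂` at `a*` and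
`β* / β̂` elsewhere, and `∑ a, Z a = 1`, because every `ℓ̂(·, h)` is a probability distribution on
actions.  Hence the sum in the numerator is `γ* / γ̂ * Z a* + β* / β̂ * (1 - Z a*)`, which is
nondecreasing in `Z a*` because `β* / β̂ ≤ 1 ≤ γ* / γ̂`, and at the maximal value `Z a* = γ̂` it
equals `γ* + (n - 1) * β* = 1`.  So the expected odds are at most `1 / P - 1 = C p`, strictly less
when the slope is positive (`β* < β̂`) and `Z a* < γ̂` (`δ(a*) < 1`).
-/

/-- A weight equal to `g` at one action and `b` at the others has total mass `(n - 1) * b + g`. -/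
lemma sum_ite_eq_one_point {A : Type*} [Fintype A] (n : ℕ) (hcard : Fintype.card A = n)
    (a₀ : A) (b g : ℝ) :
    (∑ a, if a = a₀ then g else b) = (n - 1 : ℝ) * b + g := by
  have h : ∀ a : A, (if a = a₀ then g else b) = b + if a = a₀ then g - b else 0 := by
    intro a; split_ifs <;> ring
  simp only [h, Finset.sum_add_distrib, Finset.sum_ite_eq', Finset.mem_univ, if_true,
    Finset.sum_const, Finset.card_univ, hcard, nsmul_eq_mul]
  ring

/-- One-step supermartingale bound for GBS-IRL: when the expert answers action
`a` with probability `ℓ*(a)` and the learner performs the Bayesian update with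
likelihood `ℓ̂`, the expected posterior odds against the true hypothesis `h*`
do not increase; the inequality is strict if `β* < β̂` and `δ(a*) < 1`. -/
theorem gbs_irl_supermartingale_step
    {A Hy : Type*} [Fintype A] [Fintype Hy]
    (n : ℕ) (hn : 2 ≤ n) (hcard : Fintype.card A = n)
    (F : Hy → A → ℝ)
    (hval : ∀ h a, F h a = 1 ∨ F h a = -1)
    (hopt : ∀ h, ∃! a, F h a = 1)
    (hstar : Hy) (astar : A) (hastar : F hstar astar = 1)
    (p : Hy → ℝ) (hp0 : ∀ h, 0 ≤ p h) (hp1 : (∑ h, p h) = 1)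
    (hps0 : 0 < p hstar) (hps1 : p hstar < 1)
    (βs γs βh γh : ℝ)
    (h1 : 0 < βs) (h2 : βs ≤ βh) (h3 : βh < γh) (h4 : γh ≤ γs)
    (hsum1 : (n - 1 : ℝ) * βs + γs = 1)
    (hsum2 : (n - 1 : ℝ) * βh + γh = 1)
    (ℓhat : A → Hy → ℝ)
    (hℓhat : ∀ a h, ℓhat a h = if F h a = 1 then γh else βh)
    (ℓstar : A → ℝ)
    (hℓstar : ∀ a, ℓstar a = if a = astar then γs else βs)
    (post : A → Hy → ℝ)
    (hpost : ∀ a h, post a h = p h * ℓhat a h / (∑ h', p h' * ℓhat a h'))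
    (C : (Hy → ℝ) → ℝ)
    (hC : ∀ q, C q = (1 - q hstar) / q hstar) :
    (∑ a, ℓstar a * C (post a)) ≤ C p ∧
    ((βs < βh ∧ (∑ h ∈ Finset.univ.filter (fun h => F h astar = 1), p h) < 1) →
      (∑ a, ℓstar a * C (post a)) < C p) := by
  have hβh : 0 < βh := h1.trans_le h2
  have hγh : 0 < γh := hβh.trans h3
  have hopt_iff : ∀ a, F hstar a = 1 ↔ a = astar := fun a =>
    ⟨fun h => (hopt hstar).unique h hastar, fun h => h ▸ hastar⟩
  set Z : A → ℝ := fun a => ∑ h, p h * ℓhat a h with hZ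
  have hℓpos : ∀ a h, 0 < ℓhat a h := by
    intro a h; rw [hℓhat]; split_ifs <;> assumption
  have hZpos : ∀ a, 0 < Z a := fun a =>
    Finset.sum_pos' (fun h _ => mul_nonneg (hp0 h) (hℓpos a h).le)
      ⟨hstar, Finset.mem_univ _, mul_pos hps0 (hℓpos a hstar)⟩
  have hℓsum : ∀ h, ∑ a, ℓhat a h = 1 := by
    intro h
    obtain ⟨a₀, ha₀, huniq⟩ := hopt h
    rw [← hsum2, ← sum_ite_eq_one_point n hcard a₀ βh γh]
    refine Finset.sum_congr rfl fun a _ => ?_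
    have : F h a = 1 ↔ a = a₀ := ⟨huniq a, fun e => e ▸ ha₀⟩
    simp only [hℓhat, this]
  have hZsum : ∑ a, Z a = 1 := by
    rw [hZ, Finset.sum_comm]
    simp only [← Finset.mul_sum, hℓsum, mul_one, hp1]
  have hZstar : Z astar =
      βh + (∑ h ∈ Finset.univ.filter (fun h => F h astar = 1), p h) * (γh - βh) := by
    have h : ∀ h, p h * ℓhat astar h =
        p h * βh + (if F h astar = 1 then p h else 0) * (γh - βh) := by
      intro h; rw [hℓhat]; split_ifs <;> ring
    simp only [hZ, h, Finset.sum_add_distrib, ← Finset.sum_mul, hp1, Finset.sum_filter, one_mul]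
  have hδ : (∑ h ∈ Finset.univ.filter (fun h => F h astar = 1), p h) ≤ 1 := by
    rw [← hp1]
    exact Finset.sum_le_sum_of_subset_of_nonneg (Finset.filter_subset _ _) fun h _ _ => hp0 h
  have hterm : ∀ a, ℓstar a * C (post a) =
      (βs / βh * Z a + if a = astar then (γs / γh - βs / βh) * Z a else 0) / p hstar
        - ℓstar a := by
    intro a
    have hZa := (hZpos a).ne'
    have hP := hps0.ne'
    have hpa : post a hstar = p hstar * ℓhat a hstar / Z a := hpost a hstar
    have hodds : C (post a) = Z a / (p hstar * ℓhat a hstar) - 1 := by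
      have := (hℓpos a hstar).ne'
      rw [hC, hpa]
      field_simp
    rw [hodds, hℓhat, hℓstar]
    simp only [hopt_iff]
    split_ifs <;> field_simp <;> ring
  have hsum : ∑ a, ℓstar a * C (post a) =
      (βs / βh + (γs / γh - βs / βh) * Z astar) / p hstar - 1 := by
    have hℓstar_sum : ∑ a, ℓstar a = 1 := by
      rw [← hsum1, ← sum_ite_eq_one_point n hcard astar βs γs]
      exact Finset.sum_congr rfl fun a _ => hℓstar a
    simp only [hterm, Finset.sum_sub_distrib, ← Finset.sum_div, Finset.sum_add_distrib,
      ← Finset.mul_sum, hZsum, hℓstar_sum, mul_one, Finset.sum_ite_eq', Finset.mem_univ, if_true]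
  have hCp : C p = 1 / p hstar - 1 := by
    rw [hC]; field_simp
  -- The bound is attained at `Z a* = γ̂`.
  have hmax : βs / βh + (γs / γh - βs / βh) * γh = 1 := by
    have hγ : γh = 1 - (n - 1 : ℝ) * βh := by linarith
    have e1 : γs / γh * γh = γs := div_mul_cancel₀ _ hγh.ne'
    have e2 : βs / βh * βh = βs := div_mul_cancel₀ _ hβh.ne'
    linear_combination e1 - βs / βh * hsum2 + hsum1 + (n - 1 : ℝ) * e2
  have hγratio : 1 ≤ γs / γh := (one_le_div hγh).2 h4
  rw [hsum, hCp]
  constructor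
  · have hslope : 0 ≤ γs / γh - βs / βh := by
      linarith [(div_le_one hβh).2 h2]
    have hZle : Z astar ≤ γh := by
      rw [hZstar]; nlinarith
    have := mul_le_mul_of_nonneg_left hZle hslope
    gcongr
    linarith
  · rintro ⟨hβ, hδlt⟩
    have hslope : 0 < γs / γh - βs / βh := by
      linarith [(div_lt_one hβh).2 hβ]
    have hZlt : Z astar < γh := by
      rw [hZstar]; nlinarith
    have := mul_lt_mul_of_pos_left hZlt hslope
    gcongr
    linarith
end

section
/- In the setting of the one-step supermartingale bound — A finite with |A| = n ≥ 2; H a finite set of hypotheses h : A → {−1,1} each taking value 1 at exactly one action; h* ∈ H with unique optimal action a*; p a probability distribution on H with 0 < p(h*) < 1; positive reals β*, γ*, β̂, γ̂ with (n−1)β* + γ* = 1, (n−1)β̂ + γ̂ = 1, 0 < β* ≤ β̂ < γ̂ ≤ γ*; ℓ̂, ℓ*, p_a, C as there, and ε = γ*(γ̂−β̂)/γ̂ + β*(β̂−γ̂)/β̂ — assume additionally that c < 1 is a real number such that δ(a) := Σ_{h : h(a)=1} p(h) ≤ (1+c)/2 for every a ∈ A. Then Σ_{a∈A} ℓ*(a)·C(p_a)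 ≤ (1 − ε·(1−c)/2)·C(p). -/
open scoped Classical

/-!
Write `q = p h*`, `δ a = ∑_{h : h(a) = 1} p h` and `x = 1 - δ a*`. The normalizing constant of the
posterior after action `a` is `Z a = β̂ + (γ̂ - β̂) δ a`, so the posterior odds against `h*` are
`Z a / (q ℓ̂(a, h*)) - 1`. Every hypothesis is `1` at exactly one action, hence `∑ a, δ a = 1`
(`sum_optimal_mass`), and averaging against `ℓ*` gives the exact identity

  `∑ a, ℓ* a * C (p_a) = C p - ε x / q`.

Finally `ε ≥ 0`, since `β* ≤ β̂` and `γ̂ ≤ γ*`, while `x ≥ (1 - c)/2 ≥ (1 - c)/2 * (1 - q)`.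
-/

/-- Grouping the hypotheses by their unique optimal action partitions the total mass. -/
lemma sum_optimal_mass {A Hy : Type*} [Fintype A] [Fintype Hy] (F : Hy → A → ℝ)
    (hopt : ∀ h, ∃! a, F h a = 1) (p : Hy → ℝ) :
    (∑ a, ∑ h ∈ Finset.univ.filter (fun h => F h a = 1), p h) = ∑ h, p h := by
  simp only [Finset.sum_filter]
  rw [Finset.sum_comm]
  refine Finset.sum_congr rfl fun h _ => ?_
  obtain ⟨a, ha, hu⟩ := hopt h
  rw [Finset.sum_eq_single a]
  · simp [ha]
  · intro b _ hb
    exact if_neg fun hb' => hb (hu b hb')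
  · simp

/-- Quantitative one-step supermartingale bound for GBS-IRL: if in addition
`δ(a) ≤ (1+c)/2` for every action `a` (i.e. the weighted prediction at the
queried state is at most `c < 1`), then the expected posterior odds against the
true hypothesis contract by the factor `1 - ε·(1-c)/2`. -/
theorem gbs_irl_supermartingale_step_quantitative
    {A Hy : Type*} [Fintype A] [Fintype Hy]
    (n : ℕ) (hn : 2 ≤ n) (hcard : Fintype.card A = n)
    (F : Hy → A → ℝ)
    (hval : ∀ h a, F h a = 1 ∨ F h a = -1)
    (hopt : ∀ h, ∃! a, F h a = 1)
    (hstar : Hy) (astar : A) (hastar : F hstar astar = 1)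
    (p : Hy → ℝ) (hp0 : ∀ h, 0 ≤ p h) (hp1 : (∑ h, p h) = 1)
    (hps0 : 0 < p hstar) (hps1 : p hstar < 1)
    (βs γs βh γh : ℝ)
    (h1 : 0 < βs) (h2 : βs ≤ βh) (h3 : βh < γh) (h4 : γh ≤ γs)
    (hsum1 : (n - 1 : ℝ) * βs + γs = 1)
    (hsum2 : (n - 1 : ℝ) * βh + γh = 1)
    (ℓhat : A → Hy → ℝ)
    (hℓhat : ∀ a h, ℓhat a h = if F h a = 1 then γh else βh)
    (ℓstar : A → ℝ)
    (hℓstar : ∀ a, ℓstar a = if a = astar then γs else βs)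
    (post : A → Hy → ℝ)
    (hpost : ∀ a h, post a h = p h * ℓhat a h / (∑ h', p h' * ℓhat a h'))
    (C : (Hy → ℝ) → ℝ)
    (hC : ∀ q, C q = (1 - q hstar) / q hstar)
    (ε : ℝ)
    (hε : ε = γs * (γh - βh) / γh + βs * (βh - γh) / βh)
    (c : ℝ) (hc1 : c < 1)
    (hδ : ∀ a : A,
      (∑ h ∈ Finset.univ.filter (fun h => F h a = 1), p h) ≤ (1 + c) / 2) :
    (∑ a, ℓstar a * C (post a)) ≤ (1 - ε * (1 - c) / 2) * C p := by
  have hβh : 0 < βh := lt_of_lt_of_le h1 h2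
  have hγh : 0 < γh := hβh.trans h3
  have hF : ∀ a, F hstar a = 1 ↔ a = astar := fun a =>
    ⟨fun ha => (hopt hstar).unique ha hastar, fun ha => ha ▸ hastar⟩
  set δ : A → ℝ := fun a => ∑ h ∈ Finset.univ.filter (fun h => F h a = 1), p h with hδdef
  have hδ0 : ∀ a, 0 ≤ δ a := fun a => Finset.sum_nonneg fun h _ => hp0 h
  have hδsum : (∑ a, δ a) = 1 := (sum_optimal_mass F hopt p).trans hp1
  have hZ : ∀ a, (∑ h', p h' * ℓhat a h') = βh + (γh - βh) * δ a := by
    intro a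
    have hterm : ∀ h, p h * ℓhat a h
        = βh * p h + (γh - βh) * (if F h a = 1 then p h else 0) := by
      intro h
      rw [hℓhat]
      split_ifs <;> ring
    simp only [hterm, Finset.sum_add_distrib, ← Finset.mul_sum, hp1, hδdef, Finset.sum_filter,
      mul_one]
  have hZpos : ∀ a, 0 < βh + (γh - βh) * δ a := fun a =>
    add_pos_of_pos_of_nonneg hβh (mul_nonneg (sub_pos.2 h3).le (hδ0 a))
  -- The summand splits as a part common to all actions plus a correction supported at `astar`.
  have hsummand : ∀ a, ℓstar a * C (post a)
      = (βs / βh) / p hstar * (βh + (γh - βh) * δ a) - βs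
        + (if a = astar then (γs / γh - βs / βh) / p hstar * (βh + (γh - βh) * δ a)
            - (γs - βs) else 0) := by
    intro a
    have hz := (hZpos a).ne'
    rw [hC, hpost, hZ, hℓhat, hℓstar]
    by_cases ha : a = astar
    · rw [if_pos ha, if_pos ((hF a).2 ha), if_pos ha]
      field_simp
      ring
    · rw [if_neg ha, if_neg (fun h => ha ((hF a).1 h)), if_neg ha]
      field_simp
      ring
  have hS : (∑ a, ℓstar a * C (post a))
      = (1 - p hstar - ε * (1 - δ astar)) / p hstar := by
    have hexp : (∑ a, ℓstar a * C (post a))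
        = (βs / βh) / p hstar * (n * βh + (γh - βh)) - n * βs
          + ((γs / γh - βs / βh) / p hstar * (βh + (γh - βh) * δ astar) - (γs - βs)) := by
      simp only [hsummand, Finset.sum_add_distrib, Finset.sum_sub_distrib, ← Finset.mul_sum,
        hδsum, Finset.sum_const, Finset.card_univ, hcard, nsmul_eq_mul, Finset.sum_ite_eq',
        Finset.mem_univ, if_true, mul_one]
    have hone : (n : ℝ) * βh + (γh - βh) = 1 := by linarith
    have hlin : (n : ℝ) * βs = 1 - γs + βs := by linarith
    -- Both sides equal `(n - 1) * βs * βh`.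
    have hrel : βs * (1 - γh) = βh * (1 - γs) := by
      linear_combination βh * hsum1 - βs * hsum2
    rw [hexp, hone, hlin, hε]
    field_simp
    linear_combination γh * hrel
  have hε0 : 0 ≤ ε := by
    have hγ : 1 ≤ γs / γh := (one_le_div hγh).2 h4
    have hβ : βs / βh ≤ 1 := (div_le_one hβh).2 h2
    have hε' : ε = (γh - βh) * (γs / γh - βs / βh) := by rw [hε]; ring
    rw [hε']
    exact mul_nonneg (sub_pos.2 h3).le (by linarith)
  have hx : (1 - c) / 2 * (1 - p hstar) ≤ 1 - δ astar := by
    have hδstar : δ astar ≤ (1 + c) / 2 := hδ astar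
    have hcq : 0 ≤ (1 - c) / 2 * p hstar := mul_nonneg (by linarith) hps0.le
    linarith
  rw [hS, hC p, ← mul_div_assoc]
  refine div_le_div_of_nonneg_right ?_ hps0.le
  have hεx := mul_le_mul_of_nonneg_left hx hε0
  linarith
end

section
/- Let A be a finite set of actions, H a finite set of hypotheses, h* ∈ H, and let each h ∈ H assign to each of two states i and j a vector in {−1,1}^A taking the value 1 at exactly one action (its optimal action at that state). Let p be a probability distribution on H. Suppose a_i ≠ a_j are actions with h*(i, a_i) = 1 and h*(j, a_j) = 1, and suppose that for every h ∈ H with h ≠ h*, the optimal action of h at i equals the optimal action of h at j. Then Σ_{h∈H} p(h)·(h(i,a_i) + h(j,a_j)) ≤ 2·p(h*); equivalently, δ_i(a_i) + δ_j(a_j) ≤ 1 + p(h*), where δ_x(a) := Σ_{h∈H : h(x,a)=1} p(h). -/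
/-!
A hypothesis `h ≠ hstar` has one optimal action, common to both classes, so it cannot predict
both `ai` and `aj`: its two predictions sum to at most `0`, and only `hstar` reaches the value `2`.
Both bounds follow by weighting this pointwise inequality with `p` and summing; in the second one
`h` is counted at most once, except for `hstar`, which is counted twice.
-/

open scoped Classical

/-- Situation 3 of the convergence-rate proof: two state classes `i` and `j`
(with hypothesis values `Fi`, `Fj`), with differing `h*`-optimal actions
`ai ≠ aj`, such that every hypothesis other than `h*` has the same optimal
action at both classes.  Then the combined posterior-weighted prediction of the
correct actions is controlled by `p(h*)`. -/
theorem gbs_irl_situation3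
    {A Hy : Type*} [Fintype A] [Fintype Hy]
    (Fi Fj : Hy → A → ℝ)
    (hvali : ∀ h a, Fi h a = 1 ∨ Fi h a = -1)
    (hvalj : ∀ h a, Fj h a = 1 ∨ Fj h a = -1)
    (hopti : ∀ h, ∃! a, Fi h a = 1)
    (hoptj : ∀ h, ∃! a, Fj h a = 1)
    (hstar : Hy)
    (p : Hy → ℝ) (hp0 : ∀ h, 0 ≤ p h) (hp1 : (∑ h, p h) = 1)
    (ai aj : A) (hne : ai ≠ aj)
    (hi : Fi hstar ai = 1) (hj : Fj hstar aj = 1)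
    (hsame : ∀ h : Hy, h ≠ hstar → {a | Fi h a = 1} = {a | Fj h a = 1}) :
    (∑ h, p h * (Fi h ai + Fj h aj)) ≤ 2 * p hstar ∧
    (∑ h ∈ Finset.univ.filter (fun h => Fi h ai = 1), p h) +
      (∑ h ∈ Finset.univ.filter (fun h => Fj h aj = 1), p h) ≤ 1 + p hstar := by
  -- Both actions cannot be optimal for `h ≠ hstar`, since the common optimal action is unique.
  have key : ∀ h, h ≠ hstar → Fi h ai = 1 → Fj h aj = 1 → False := by
    intro h hh h1 h2
    have h3 : aj ∈ {a | Fi h a = 1} := by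
      rw [hsame h hh]
      exact h2
    exact hne ((hopti h).unique h1 h3)
  have hs : (∑ h, if h = hstar then p h else 0) = p hstar := by simp
  constructor
  · calc (∑ h, p h * (Fi h ai + Fj h aj))
        ≤ ∑ h, 2 * (if h = hstar then p h else 0) := by
          refine Finset.sum_le_sum fun h _ => ?_
          have hp := hp0 h
          by_cases hh : h = hstar
          · subst hh
            rw [hi, hj, if_pos rfl]
            linarith
          · rw [if_neg hh]
            rcases hvali h ai with h1 | h1 <;> rcases hvalj h aj with h2 | h2
            · exact (key h hh h1 h2).elim
            all_goals
              rw [h1, h2]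
              linarith
      _ = 2 * p hstar := by rw [← Finset.mul_sum, hs]
  · rw [Finset.sum_filter, Finset.sum_filter, ← Finset.sum_add_distrib]
    calc (∑ h, ((if Fi h ai = 1 then p h else 0) + (if Fj h aj = 1 then p h else 0)))
        ≤ ∑ h, (p h + (if h = hstar then p h else 0)) := by
          refine Finset.sum_le_sum fun h _ => ?_
          have hp := hp0 h
          have hk := key h
          split_ifs <;> first | linarith | exact (hk ‹_› ‹_› ‹_›).elim
      _ = 1 + p hstar := by rw [Finset.sum_add_distrib, hs, hp1]
end

section
/- Let A be a finite set of actions, H a finite set of hypotheses, h* ∈ H, and let each h ∈ H assign to each of two states i and j a vector in {−1,1}^A taking the value 1 at exactly one action (its optimal action at that state). Let p be a probability distribution on H, and let a_i*, a_j* denote the optimal actions of h* at i and j respectively. Assume (1-neighbors): at most one h ∈ H has its optimal action at i different from its optimal action at j. Assume further that there exist â_i maximizing a ↦ Σ_{h} p(h)h(i,a) and â_j maximizing a ↦ Σ_{h} p(h)h(j,a) with â_i ≠ â_j. Then δ_i(a_i*) + δ_j(a_j*) ≤ max{3/2, 1 + p(h*)}, where δ_x(a) := Σ_{h∈H : h(x,a)=1}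 p(h). -/
open scoped Classical

/-!
Let `δ_x(a)` be the `p`-mass of the hypotheses for which `a` is optimal at `x`. If the predicted
action `â_x` differs from `a_x*`, then no hypothesis has value `1` at both, so
`∑ p h * (h(x, a_x*) + h(x, â_x)) ≤ 0`; by maximality of `â_x` this forces
`∑ p h * h(x, a_x*) ≤ 0`, i.e. `δ_x(a_x*) ≤ 1/2` (`mass_le_half`), and the total is at most `3/2`.
If both predictions are correct, then `a_i* ≠ a_j*`, so `h*` is the one hypothesis whose optimal
actions at `i` and `j` differ. Every other hypothesis contributes to at most one of the two
masses, and the total is at most `1 + p h*`.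
-/

/-- A non-predicted action is optimal for hypotheses of total mass at most `1/2`. -/
lemma mass_le_half {A Hy : Type*} [Fintype Hy] (F : Hy → A → ℝ)
    (hval : ∀ h a, F h a = 1 ∨ F h a = -1) (hopt : ∀ h, ∃! a, F h a = 1)
    (p : Hy → ℝ) (hp0 : ∀ h, 0 ≤ p h) (hp1 : (∑ h, p h) = 1) (a ahat : A)
    (hmax : (∑ h, p h * F h a) ≤ ∑ h, p h * F h ahat) (hne : ahat ≠ a) :
    (∑ h ∈ Finset.univ.filter (fun h => F h a = 1), p h) ≤ 1 / 2 := by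
  have h1 : (∑ h, p h * F h a) + ∑ h, p h * F h ahat ≤ 0 := by
    rw [← Finset.sum_add_distrib]
    refine Finset.sum_nonpos fun h _ => ?_
    have := hp0 h
    rcases hval h a with e | e <;> rcases hval h ahat with e' | e'
    · exact absurd ((hopt h).unique e' e) hne
    all_goals rw [e, e']; linarith
  have h2 : (∑ h ∈ Finset.univ.filter (fun h => F h a = 1), p h)
      = ((∑ h, p h) + ∑ h, p h * F h a) / 2 := by
    rw [← Finset.sum_add_distrib, Finset.sum_div, Finset.sum_filter]
    refine Finset.sum_congr rfl fun h _ => ?_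
    rcases hval h a with e | e
    · rw [e, if_pos rfl]; ring
    · rw [e, if_neg (by norm_num)]; ring
  linarith

lemma mass_le_one {Hy : Type*} [Fintype Hy] (p : Hy → ℝ) (hp0 : ∀ h, 0 ≤ p h)
    (hp1 : (∑ h, p h) = 1) (s : Finset Hy) : (∑ h ∈ s, p h) ≤ 1 :=
  hp1 ▸ Finset.sum_le_sum_of_subset_of_nonneg (Finset.subset_univ s) fun h _ _ => hp0 h

/-- Combined estimate over the three situations of the convergence-rate proof:
two 1-neighboring state classes `i`, `j` (at most one hypothesis has different
optimal actions at the two classes) whose predicted actions `âi ≠ âj` differ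
satisfy `δ_i(a_i*) + δ_j(a_j*) ≤ max {3/2, 1 + p(h*)}`, where `a_i*`, `a_j*`
are the `h*`-optimal actions. -/
theorem gbs_irl_neighbor_query_bound
    {A Hy : Type*} [Fintype A] [Fintype Hy]
    (Fi Fj : Hy → A → ℝ)
    (hvali : ∀ h a, Fi h a = 1 ∨ Fi h a = -1)
    (hvalj : ∀ h a, Fj h a = 1 ∨ Fj h a = -1)
    (hopti : ∀ h, ∃! a, Fi h a = 1)
    (hoptj : ∀ h, ∃! a, Fj h a = 1)
    (hstar : Hy)
    (p : Hy → ℝ) (hp0 : ∀ h, 0 ≤ p h) (hp1 : (∑ h, p h) = 1)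
    (ais ajs : A) (hi : Fi hstar ais = 1) (hj : Fj hstar ajs = 1)
    (hneighbor : {h : Hy | {a | Fi h a = 1} ≠ {a | Fj h a = 1}}.Subsingleton)
    (ahati ahatj : A)
    (hmaxi : ∀ a, (∑ h, p h * Fi h a) ≤ ∑ h, p h * Fi h ahati)
    (hmaxj : ∀ a, (∑ h, p h * Fj h a) ≤ ∑ h, p h * Fj h ahatj)
    (hhatne : ahati ≠ ahatj) :
    (∑ h ∈ Finset.univ.filter (fun h => Fi h ais = 1), p h) +
      (∑ h ∈ Finset.univ.filter (fun h => Fj h ajs = 1), p h) ≤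
      max (3 / 2) (1 + p hstar) := by
  by_cases hci : ahati = ais
  · by_cases hcj : ahatj = ajs
    · subst hci hcj
      refine le_trans ?_ (le_max_right _ _)
      have hs : {a | Fi hstar a = 1} ≠ {a | Fj hstar a = 1} := fun e =>
        hhatne ((hoptj hstar).unique (e.subset hi) hj)
      rw [← Finset.sum_union_inter]
      refine add_le_add (mass_le_one p hp0 hp1 _) ?_
      rw [← Finset.sum_singleton p hstar]
      refine Finset.sum_le_sum_of_subset_of_nonneg (fun h hh => ?_) fun h _ _ => hp0 h
      simp only [Finset.mem_inter, Finset.mem_filter, Finset.mem_univ, true_and] at hh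
      have hd : {a | Fi h a = 1} ≠ {a | Fj h a = 1} := fun e =>
        hhatne ((hoptj h).unique (e.subset hh.1) hh.2)
      exact Finset.mem_singleton.2 (hneighbor hd hs)
    · have h1 := mass_le_half Fj hvalj hoptj p hp0 hp1 ajs ahatj (hmaxj ajs) hcj
      have h2 := mass_le_one p hp0 hp1 (Finset.univ.filter (fun h => Fi h ais = 1))
      exact le_trans (by linarith) (le_max_left _ _)
  · have h1 := mass_le_half Fi hvali hopti p hp0 hp1 ais ahati (hmaxi ais) hci
    have h2 := mass_le_one p hp0 hp1 (Finset.univ.filter (fun h => Fj h ajs = 1))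
    exact le_trans (by linarith) (le_max_left _ _)
end

section
/- In the two-state randomized query setting — A finite with |A| = n ≥ 2; H a finite set of hypotheses, each assigning to each of two states i, j a vector in {−1,1}^A with exactly one entry equal to 1; h* ∈ H with 0 < p(h*) < 1 for a probability distribution p on H; a_i*, a_j* the h*-optimal actions at i, j; at most one h ∈ H having different optimal actions at i and j; and maximizers â_i, â_j of a ↦ Σ_h p(h)h(i,a) and a ↦ Σ_h p(h)h(j,a) satisfying â_i ≠ â_j — let β*, γ*, β̂, γ̂ be positive reals with (n−1)β* + γ* = 1, (n−1)β̂ + γ̂ = 1, 0 < β* ≤ β̂ < γ̂ ≤ γ*, and define for each state x ∈ {i,j}: ℓ̂_x(a,h) = γ̂ if h(x,a)=1 and β̂ otherwise, ℓ*_x(a) = γ* if a = a_x* and β* otherwise, the posterior p_{x,a}(h) = p(h)ℓ̂_x(a,h)/Σ_{h'} p(h')ℓ̂_x(a,h'), the odds C(q) = (1−q(h*))/q(h*), and ε = γ*(γ̂−β̂)/γ̂ + β*(β̂−γ̂)/β̂. Then (1/2)·[ Σ_{a∈A} ℓ*_i(a)·C(p_{i,a}) + Σ_{a∈A} ℓ*_j(a)·C(p_{j,a})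 ] ≤ (1 − ε/4)·C(p). -/
/-!
Write `P a` for the mass of the hypotheses whose optimal action (at a given state) is `a`, and `P*`
for its value at the `h*`-optimal action. The normaliser of the posterior is affine in `P a`, namely
`βh + (γh - βh) * P a`, so summing the reweighted odds over all actions gives an exact identity
(`expected_odds_eq`): the expected odds equal `C p - ε * (1 - P*) / p h*`. Since `ε ≥ 0`,
the claim then follows from `(1 - Pi*) + (1 - Pj*) ≥ (1 - p h*) / 2`.

If the `h*`-optimal actions agree at the two states, they differ from one of the predicted actions,
and a non-maximal action carries mass at most `1/2` (`actionMass_le_half`). If they differ, then `h*`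
is the only hypothesis that distinguishes the states, so every other hypothesis contributes to at most
one of `Pi*`, `Pj*`; hence `Pi* + Pj* ≤ 1 + p h*` (`actionMass_add_le`).
-/

open scoped Classical

/-- The total mass under `p` of the hypotheses whose optimal action is `a`. -/
noncomputable def actionMass {A Hy : Type*} [Fintype Hy] (F : Hy → A → ℝ) (p : Hy → ℝ) (a : A) : ℝ :=
  ∑ h, if F h a = 1 then p h else 0

theorem sum_actionMass {A Hy : Type*} [Fintype A] [Fintype Hy] (F : Hy → A → ℝ)
    (hopt : ∀ h, ∃! a, F h a = 1) (p : Hy → ℝ) (hp1 : (∑ h, p h) = 1) :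
    ∑ a, actionMass F p a = 1 := by
  unfold actionMass
  rw [Finset.sum_comm]
  refine Eq.trans ?_ hp1
  refine Finset.sum_congr rfl fun h _ => ?_
  obtain ⟨b, hb, hu⟩ := hopt h
  rw [Finset.sum_eq_single b]
  · exact if_pos hb
  · intro a _ hab
    have hn : ¬ F h a = 1 := fun h' => hab (hu a h')
    exact if_neg hn
  · simp

/-- The maximised score `∑ h, p h * F h a` is `2 * actionMass F p a - 1`, so a maximiser of it has the
largest mass, and two distinct actions share a total mass of at most `1`. -/
theorem actionMass_le_half {A Hy : Type*} [Fintype A] [Fintype Hy] (F : Hy → A → ℝ)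
    (hval : ∀ h a, F h a = 1 ∨ F h a = -1)
    (hopt : ∀ h, ∃! a, F h a = 1) (p : Hy → ℝ) (hp0 : ∀ h, 0 ≤ p h) (hp1 : (∑ h, p h) = 1)
    (ahat : A) (hmax : ∀ a, (∑ h, p h * F h a) ≤ ∑ h, p h * F h ahat)
    (a : A) (ha : a ≠ ahat) : actionMass F p a ≤ 1 / 2 := by
  have key : ∀ b, ∑ h, p h * F h b = 2 * actionMass F p b - 1 := by
    intro b
    rw [← hp1]
    unfold actionMass
    rw [Finset.mul_sum, ← Finset.sum_sub_distrib]
    refine Finset.sum_congr rfl fun h _ => ?_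
    rcases hval h b with hv | hv
    · rw [if_pos hv, hv]; ring
    · rw [if_neg (by rw [hv]; norm_num), hv]; ring
  have hle := hmax a
  rw [key, key] at hle
  have hnn : ∀ b, 0 ≤ actionMass F p b := fun b =>
    Finset.sum_nonneg fun h _ => by split_ifs <;> simp [hp0]
  have h2 : actionMass F p a + actionMass F p ahat ≤ ∑ b, actionMass F p b := by
    rw [← Finset.sum_pair ha]
    exact Finset.sum_le_sum_of_subset_of_nonneg (Finset.subset_univ _) fun b _ _ => hnn b
  rw [sum_actionMass F hopt p hp1] at h2
  linarith

/-- Only `hstar` may be counted in both masses; every other hypothesis has the same optimal action at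
both states, hence is counted for at most one of `a ≠ b`. -/
theorem actionMass_add_le {A Hy : Type*} [Fintype Hy] (Fi Fj : Hy → A → ℝ)
    (hopt : ∀ h, ∃! a, Fi h a = 1) (p : Hy → ℝ) (hp0 : ∀ h, 0 ≤ p h) (hp1 : (∑ h, p h) = 1)
    (hstar : Hy) (a b : A) (hab : a ≠ b)
    (hsame : ∀ h, h ≠ hstar → {a | Fi h a = 1} = {a | Fj h a = 1}) :
    actionMass Fi p a + actionMass Fj p b ≤ 1 + p hstar := by
  have hs : p hstar = ∑ h, if h = hstar then p h else 0 := by simp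
  rw [← hp1, hs]
  unfold actionMass
  rw [← Finset.sum_add_distrib, ← Finset.sum_add_distrib]
  refine Finset.sum_le_sum fun h _ => ?_
  have h0 := hp0 h
  by_cases hh : h = hstar
  · rw [if_pos hh]
    split_ifs <;> linarith
  · have hiff : Fi h b = 1 ↔ Fj h b = 1 := Set.ext_iff.mp (hsame h hh) b
    rw [if_neg hh, ← if_congr hiff rfl rfl]
    by_cases h1 : Fi h a = 1
    · have h2 : ¬ Fi h b = 1 := fun h2 => hab ((hopt h).unique h1 h2)
      simp [h1, h2]
    · simp only [if_neg h1]
      split_ifs <;> linarith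

/-- The expected posterior odds after one query, in closed form. -/
theorem expected_odds_eq {A Hy : Type*} [Fintype A] [Fintype Hy]
    (n : ℕ) (hcard : Fintype.card A = n) (F : Hy → A → ℝ)
    (hopt : ∀ h, ∃! a, F h a = 1) (hstar : Hy)
    (p : Hy → ℝ) (hp0 : ∀ h, 0 ≤ p h) (hp1 : (∑ h, p h) = 1) (hps0 : 0 < p hstar)
    (as : A) (has : F hstar as = 1) (βs γs βh γh : ℝ)
    (hβ : 0 < βh) (hβγ : βh < γh) (hsum1 : (n - 1 : ℝ) * βs + γs = 1)
    (ℓhat : A → Hy → ℝ) (hℓhat : ∀ a h, ℓhat a h = if F h a = 1 then γh else βh)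
    (ℓstar : A → ℝ) (hℓstar : ∀ a, ℓstar a = if a = as then γs else βs)
    (post : A → Hy → ℝ)
    (hpost : ∀ a h, post a h = p h * ℓhat a h / (∑ h', p h' * ℓhat a h'))
    (C : (Hy → ℝ) → ℝ) (hC : ∀ q, C q = (1 - q hstar) / q hstar)
    (ε : ℝ) (hε : ε = γs * (γh - βh) / γh + βs * (βh - γh) / βh) :
    ∑ a, ℓstar a * C (post a) = C p - ε * (1 - actionMass F p as) / p hstar := by
  have hγ : 0 < γh := hβ.trans hβγ
  have hD : ∀ a, ∑ h, p h * ℓhat a h = βh + (γh - βh) * actionMass F p a := by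
    intro a
    have hb : βh = ∑ h, βh * p h := by rw [← Finset.mul_sum, hp1, mul_one]
    nth_rewrite 1 [hb]
    unfold actionMass
    rw [Finset.mul_sum, ← Finset.sum_add_distrib]
    refine Finset.sum_congr rfl fun h _ => ?_
    rw [hℓhat]
    split_ifs <;> ring
  have hDpos : ∀ a, 0 < βh + (γh - βh) * actionMass F p a := by
    intro a
    have hm : 0 ≤ actionMass F p a :=
      Finset.sum_nonneg fun h _ => by split_ifs <;> simp [hp0]
    have := mul_nonneg (sub_nonneg.mpr hβγ.le) hm
    linarith
  have hstar_iff : ∀ a, F hstar a = 1 ↔ a = as := fun a =>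
    ⟨fun h => (hopt hstar).unique h has, fun h => h ▸ has⟩
  -- Each summand is the off-optimal expression plus a correction supported at `as`.
  have hterm : ∀ a, ℓstar a * C (post a) =
      (βs * (1 / p hstar - 1) + βs * (γh - βh) / (p hstar * βh) * actionMass F p a) +
      if a = as then
        γs * ((βh + (γh - βh) * actionMass F p as) / (p hstar * γh) - 1) -
        βs * ((βh + (γh - βh) * actionMass F p as) / (p hstar * βh) - 1)
      else 0 := by
    intro a
    have hd := (hDpos a).ne'
    have hp := hps0.ne'
    rw [hC, hpost, hD, hℓstar, hℓhat]
    by_cases ha : a = as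
    · subst ha
      rw [if_pos rfl, if_pos has, if_pos rfl]
      field_simp
      ring
    · rw [if_neg ha, if_neg (fun h => ha ((hstar_iff a).mp h)), if_neg ha]
      field_simp
      ring
  simp_rw [hterm]
  rw [Finset.sum_add_distrib, Finset.sum_add_distrib,
    ← Finset.mul_sum Finset.univ (actionMass F p), sum_actionMass F hopt p hp1, Finset.sum_ite_eq' Finset.univ as, if_pos (Finset.mem_univ _),
    Finset.sum_const, Finset.card_univ, hcard, nsmul_eq_mul, hC, hε]
  have hg : γs = 1 - (n - 1 : ℝ) * βs := by linarith
  rw [hg]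
  field_simp
  ring

/-- Per-step contraction of the expected posterior odds against the target
hypothesis when GBS-IRL queries, uniformly at random, one of two 1-neighboring
state classes whose predicted optimal actions differ:
`(1/2)·[∑_a ℓ*_i(a)·C(p_{i,a}) + ∑_a ℓ*_j(a)·C(p_{j,a})] ≤ (1 - ε/4)·C(p)`. -/
theorem gbs_irl_randomized_query_contraction
    {A Hy : Type*} [Fintype A] [Fintype Hy]
    (n : ℕ) (hn : 2 ≤ n) (hcard : Fintype.card A = n)
    (Fi Fj : Hy → A → ℝ)
    (hvali : ∀ h a, Fi h a = 1 ∨ Fi h a = -1)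
    (hvalj : ∀ h a, Fj h a = 1 ∨ Fj h a = -1)
    (hopti : ∀ h, ∃! a, Fi h a = 1)
    (hoptj : ∀ h, ∃! a, Fj h a = 1)
    (hstar : Hy)
    (p : Hy → ℝ) (hp0 : ∀ h, 0 ≤ p h) (hp1 : (∑ h, p h) = 1)
    (hps0 : 0 < p hstar) (hps1 : p hstar < 1)
    (ais ajs : A) (hi : Fi hstar ais = 1) (hj : Fj hstar ajs = 1)
    (hneighbor : {h : Hy | {a | Fi h a = 1} ≠ {a | Fj h a = 1}}.Subsingleton)
    (ahati ahatj : A)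
    (hmaxi : ∀ a, (∑ h, p h * Fi h a) ≤ ∑ h, p h * Fi h ahati)
    (hmaxj : ∀ a, (∑ h, p h * Fj h a) ≤ ∑ h, p h * Fj h ahatj)
    (hhatne : ahati ≠ ahatj)
    (βs γs βh γh : ℝ)
    (h1 : 0 < βs) (h2 : βs ≤ βh) (h3 : βh < γh) (h4 : γh ≤ γs)
    (hsum1 : (n - 1 : ℝ) * βs + γs = 1)
    (hsum2 : (n - 1 : ℝ) * βh + γh = 1)
    (ℓhati ℓhatj : A → Hy → ℝ)
    (hℓhati : ∀ a h, ℓhati a h = if Fi h a = 1 then γh else βh)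
    (hℓhatj : ∀ a h, ℓhatj a h = if Fj h a = 1 then γh else βh)
    (ℓstari ℓstarj : A → ℝ)
    (hℓstari : ∀ a, ℓstari a = if a = ais then γs else βs)
    (hℓstarj : ∀ a, ℓstarj a = if a = ajs then γs else βs)
    (posti postj : A → Hy → ℝ)
    (hposti : ∀ a h, posti a h = p h * ℓhati a h / (∑ h', p h' * ℓhati a h'))
    (hpostj : ∀ a h, postj a h = p h * ℓhatj a h / (∑ h', p h' * ℓhatj a h'))
    (C : (Hy → ℝ) → ℝ)
    (hC : ∀ q, C q = (1 - q hstar) / q hstar)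
    (ε : ℝ)
    (hε : ε = γs * (γh - βh) / γh + βs * (βh - γh) / βh) :
    (1 / 2) * ((∑ a, ℓstari a * C (posti a)) + (∑ a, ℓstarj a * C (postj a))) ≤
      (1 - ε / 4) * C p := by
  have hβ : 0 < βh := h1.trans_le h2
  have hγ : 0 < γh := hβ.trans h3
  rw [expected_odds_eq n hcard Fi hopti hstar p hp0 hp1 hps0 ais hi βs γs βh γh hβ h3 hsum1
      ℓhati hℓhati ℓstari hℓstari posti hposti C hC ε hε,
    expected_odds_eq n hcard Fj hoptj hstar p hp0 hp1 hps0 ajs hj βs γs βh γh hβ h3 hsum1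
      ℓhatj hℓhatj ℓstarj hℓstarj postj hpostj C hC ε hε]
  have hε0 : 0 ≤ ε := by
    have e : ε = (γh - βh) * (γs / γh - βs / βh) := by rw [hε]; ring
    have e1 : 1 ≤ γs / γh := (one_le_div hγ).mpr h4
    have e2 : βs / βh ≤ 1 := (div_le_one hβ).mpr h2
    rw [e]
    exact mul_nonneg (by linarith) (by linarith)
  have hle : ∀ (F : Hy → A → ℝ) (a : A), actionMass F p a ≤ 1 := by
    intro F a
    rw [← hp1]
    exact Finset.sum_le_sum fun h _ => by split_ifs <;> simp [hp0]
  have key : (1 - p hstar) / 2 ≤ (1 - actionMass Fi p ais) + (1 - actionMass Fj p ajs) := by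
    by_cases hs : ais = ajs
    · have hI := hle Fi ais
      have hJ := hle Fj ajs
      by_cases ha : ais = ahati
      · have hne : ajs ≠ ahatj := fun h => hhatne (by rw [← ha, hs, h])
        have := actionMass_le_half Fj hvalj hoptj p hp0 hp1 ahatj hmaxj ajs hne
        linarith
      · have := actionMass_le_half Fi hvali hopti p hp0 hp1 ahati hmaxi ais ha
        linarith
    · have hmem : {a | Fi hstar a = 1} ≠ {a | Fj hstar a = 1} := fun h =>
        hs ((hoptj hstar).unique ((Set.ext_iff.mp h ais).mp hi) hj)
      have hsame : ∀ h, h ≠ hstar → {a | Fi h a = 1} = {a | Fj h a = 1} := by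
        intro h hne
        by_contra hc
        exact hne (hneighbor hc hmem)
      have := actionMass_add_le Fi Fj hopti p hp0 hp1 hstar ais ajs hs hsame
      linarith
  have hmul := div_le_div_of_nonneg_right (mul_le_mul_of_nonneg_left key hε0) hps0.le
  have e1 : ε * ((1 - p hstar) / 2) / p hstar = ε / 2 * C p := by rw [hC]; ring
  rw [e1, mul_add, add_div] at hmul
  linarith
end
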